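/- Let λ and λ' be ordered weight vectors with λ1 > 1/2 and λ1' > 1/2 (i.e. both Bell-diagonal states are entangled). If ρ_BD(λ) can be transformed to ρ_BD(λ') by SLOCC, then: λ1 ≥ λ1'; (1−2λ2)·(λ3'+λ4') ≥ (1−2λ2')·(λ3+λ4); and (1−2λ2−2λ3)·λ4' ≥ (1−2λ2'−2λ3')·λ4. -/

import Mathlib

open Matrix Complex
open scoped Kronecker ComplexOrder

noncomputable section
namespace Paper

abbrev Q2 := Fin 2 × Fin 2
abbrev M4 := Matrix Q2 Q2 ℂ
abbrev M16 := Matrix (Q2 × Q2) (Q2 × Q2) ℂ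

/-- `1/√2` as a complex number. -/
def invSqrt2 : ℂ := ((Real.sqrt 2)⁻¹ : ℝ)

/-- The four Bell states `|Φ₁⟩,…,|Φ₄⟩` as vectors in `ℂ²⊗ℂ²`
(product basis indexed by `Fin 2 × Fin 2`). -/
def bell : Fin 4 → Q2 → ℂ :=
  ![fun p => !![invSqrt2, 0; 0, invSqrt2] p.1 p.2,
    fun p => !![invSqrt2, 0; 0, -invSqrt2] p.1 p.2,
    fun p => !![0, invSqrt2; invSqrt2, 0] p.1 p.2,
    fun p => !![0, invSqrt2; -invSqrt2, 0] p.1 p.2]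

/-- The Bell projectors `Π_i = |Φ_i⟩⟨Φ_i|`. -/
def BellProj (i : Fin 4) : M4 := vecMulVec (bell i) (star (bell i))

/-- The Pauli matrices `σ_x, σ_y, σ_z`. -/
def pauli : Fin 3 → Matrix (Fin 2) (Fin 2) ℂ :=
  ![!![0, 1; 1, 0], !![0, -I; I, 0], !![1, 0; 0, -1]]

/-- Reindexing `((a',b'),(a'',b'')) ↦ ((a',a''),(b',b''))`. -/
def swapMid : (Q2 × Q2) ≃ (Q2 × Q2) where
  toFun p := ((p.1.1, p.2.1), (p.1.2, p.2.2))
  invFun p := ((p.1.1, p.2.1), (p.1.2, p.2.2))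
  left_inv _ := rfl
  right_inv _ := rfl

/-- The rank-one matrix `x x†`. -/
def pureMat {d : Type*} (x : d → ℂ) : Matrix d d ℂ := vecMulVec x (star x)

/-- Separability of a 16×16 four-qubit matrix (qubit order A',B',A'',B'')
across the partition A = (A',A''), B = (B',B''). -/
def SepAB (ρ : M16) : Prop :=
  ∃ (n : ℕ) (x y : Fin n → Q2 → ℂ),
    (Matrix.reindex swapMid swapMid ρ) = ∑ k, (pureMat (x k)) ⊗ₖ (pureMat (y k))


/-- `ρ` can be transformed to `ρ'` by SLOCC: `ρ' = c·Σ_k (A_k⊗B_k) ρ (A_k⊗B_k)†`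
for finitely many local Kraus pairs and some `c > 0`. -/
def SLOCCto (ρ ρ' : M4) : Prop :=
  ∃ (N : ℕ) (A B : Fin N → Matrix (Fin 2) (Fin 2) ℂ) (c : ℝ),
    0 < c ∧ ρ' = (c : ℂ) • ∑ k, (A k ⊗ₖ B k) * ρ * (A k ⊗ₖ B k)ᴴ

/-- `ρ` and `ρ'` are SLOCC equivalent. -/
def SLOCCequiv (ρ ρ' : M4) : Prop := SLOCCto ρ ρ' ∧ SLOCCto ρ' ρ

/-- The Bell-diagonal state with weight vector `l`. -/
def rhoBD (l : Fin 4 → ℝ) : M4 := ∑ i, (l i : ℂ) • BellProj i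

/-- `l` is a weight vector: nonnegative entries summing to `1`. -/
def IsWeight (l : Fin 4 → ℝ) : Prop := (∀ i, 0 ≤ l i) ∧ ∑ i, l i = 1

/-- `l` is ordered: `λ₁ ≥ λ₂ ≥ λ₃ ≥ λ₄`. -/
def IsOrdered (l : Fin 4 → ℝ) : Prop := l 1 ≤ l 0 ∧ l 2 ≤ l 1 ∧ l 3 ≤ l 2

/-- A two-qubit density matrix. -/
def IsDensity (ρ : M4) : Prop := ρ.PosSemidef ∧ ρ.trace = 1

/-- Separability of a two-qubit matrix. -/
def Sep2 (ρ : M4) : Prop :=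
  ∃ (N : ℕ) (x y : Fin N → Fin 2 → ℂ),
    ρ = ∑ k, (pureMat (x k)) ⊗ₖ (pureMat (y k))

/-!
In the magic basis (the Bell basis with two vectors multiplied by `i`) a local operator `A ⊗ B`
becomes a matrix `O` with `Oᵀ O = O Oᵀ = d`, where `d = det A det B`, and it acts on Bell weights
through the squared moduli `|O j i|²`. Two rows or columns `u`, `v` of `O` satisfy
`u ⬝ u = v ⬝ v = d` and `u ⬝ v = 0`, so `u ± i v` are isotropic, and an isotropic vector `z` has no
dominant entry: `2 |z j|² ≤ ∑ |z k|²`. Hence each Kraus operator multiplies the excess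
`λ₁ - λ₂ - λ₃ - λ₄` by at most `|d|`, and each of `λ₁ + λ₂ + λ₃ + λ₄`, `λ₃ + λ₄`, `λ₄` by at least
`|d|`. These bounds add up over the Kraus operators, and the total factor cancels when the bound on
the excess is combined with any of the other three.
-/

section Excess

variable {n : Type*} [Fintype n]

/-- The amount by which the entry `l i` exceeds the sum of all the others. For the weights of a
Bell-diagonal state with `l i ≥ 1 / 2` it is the concurrence. -/
def excess (i : n) (l : n → ℝ) : ℝ := 2 * l i - ∑ j, l j

theorem excess_add (i : n) (l m : n → ℝ) : excess i (l + m) = excess i l + excess i m := by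
  simp only [excess, Pi.add_apply, Finset.sum_add_distrib]
  ring

theorem excess_smul (i : n) (c : ℝ) (l : n → ℝ) : excess i (c • l) = c * excess i l := by
  simp only [excess, Pi.smul_apply, smul_eq_mul, ← Finset.mul_sum]
  ring

theorem excess_sum {ι : Type*} (s : Finset ι) (i : n) (l : ι → n → ℝ) :
    excess i (∑ k ∈ s, l k) = ∑ k ∈ s, excess i (l k) :=
  map_sum (AddMonoidHom.mk' (excess i) (excess_add i)) l s

theorem excess_mulVec {m : Type*} [Fintype m] (M : Matrix n m ℝ) (i : n) (l : m → ℝ) :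
    excess i (M *ᵥ l) = ∑ k, l k * excess i (Mᵀ k) := by
  simp only [mulVec_eq_sum, op_smul_eq_smul, excess_sum, excess_smul]

theorem norm_sum_mul_self_le {ι : Type*} (s : Finset ι) (z : ι → ℂ) :
    ‖∑ j ∈ s, z j * z j‖ ≤ ∑ j ∈ s, ‖z j‖ ^ 2 := by
  simpa only [norm_mul, ← sq ‖_‖] using norm_sum_le s fun j => z j * z j

theorem excess_norm_sq_le (z : n → ℂ) (i : n) :
    excess i (fun j => ‖z j‖ ^ 2) ≤ ‖z ⬝ᵥ z‖ := by
  classical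
  have split_dot : z i * z i + ∑ j ∈ Finset.univ.erase i, z j * z j = z ⬝ᵥ z :=
    Finset.add_sum_erase _ (fun j => z j * z j) (Finset.mem_univ i)
  have split_sum : ‖z i‖ ^ 2 + ∑ j ∈ Finset.univ.erase i, ‖z j‖ ^ 2 = ∑ j, ‖z j‖ ^ 2 :=
    Finset.add_sum_erase _ (fun j => ‖z j‖ ^ 2) (Finset.mem_univ i)
  have norm_entry : ‖z i‖ ^ 2 ≤ ‖z ⬝ᵥ z‖ + ‖∑ j ∈ Finset.univ.erase i, z j * z j‖ := by
    rw [sq, ← norm_mul, eq_sub_of_add_eq split_dot]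
    exact norm_sub_le _ _
  have norm_rest := norm_sum_mul_self_le (Finset.univ.erase i) z
  unfold excess
  linarith

theorem norm_add_I_mul_sq_add_norm_sub_I_mul_sq (a b : ℂ) :
    ‖a + I * b‖ ^ 2 + ‖a - I * b‖ ^ 2 = 2 * (‖a‖ ^ 2 + ‖b‖ ^ 2) := by
  simpa [sq] using parallelogram_law_with_norm ℝ a (I * b)

theorem excess_norm_sq_add_le_zero {u v : n → ℂ} (hself : u ⬝ᵥ u = v ⬝ᵥ v) (horth : u ⬝ᵥ v = 0)
    (i : n) : excess i (fun j => ‖u j‖ ^ 2) + excess i (fun j => ‖v j‖ ^ 2) ≤ 0 := by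
  have isotropic_add : (u + I • v) ⬝ᵥ (u + I • v) = 0 := by
    simp [dotProduct_comm v u, hself, horth, ← mul_assoc]
  have isotropic_sub : (u - I • v) ⬝ᵥ (u - I • v) = 0 := by
    simp [dotProduct_comm v u, hself, horth, ← mul_assoc]
  have excess_add_le := excess_norm_sq_le (u + I • v) i
  have excess_sub_le := excess_norm_sq_le (u - I • v) i
  rw [isotropic_add, norm_zero] at excess_add_le
  rw [isotropic_sub, norm_zero] at excess_sub_le
  have parallelogram : (fun j => ‖(u + I • v) j‖ ^ 2) + (fun j => ‖(u - I • v) j‖ ^ 2) =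
      (2 : ℝ) • ((fun j => ‖u j‖ ^ 2) + fun j => ‖v j‖ ^ 2) :=
    funext fun j => norm_add_I_mul_sq_add_norm_sub_I_mul_sq (u j) (v j)
  have excess_parallelogram := congrArg (excess i) parallelogram
  rw [excess_add, excess_smul, excess_add] at excess_parallelogram
  linarith

end Excess

section ScaledOrthogonal

variable {m n : Type*}

/-- The entrywise squared moduli of a complex matrix; it carries Bell weights to Bell weights when
the matrix is a Kraus operator in the Bell basis. -/
def modSq (O : Matrix m n ℂ) : Matrix m n ℝ := O.map fun z => ‖z‖ ^ 2

theorem modSq_nonneg (O : Matrix m n ℂ) (i : m) (j : n) : 0 ≤ modSq O i j := sq_nonneg ‖O i j‖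

variable [Fintype n] [DecidableEq n]

theorem mul_diagonal_mul_conjTranspose_apply_self (O : Matrix m n ℂ) (l : n → ℝ) (j : m) :
    (O * diagonal (fun i => (l i : ℂ)) * Oᴴ) j j = ((modSq O *ᵥ l) j : ℂ) := by
  simp only [mul_apply (N := Oᴴ), mul_diagonal, conjTranspose_apply, mulVec, dotProduct, modSq,
    map_apply, ofReal_sum, ofReal_mul, ofReal_pow, ← conj_mul', star_def]
  exact Finset.sum_congr rfl fun i _ => by ring

/-- For `d ≠ 0`, a complex multiple of a complex orthogonal matrix. Both identities are required
because neither implies the other when `d = 0`. -/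
structure IsScaledOrthogonal (d : ℂ) (O : Matrix n n ℂ) : Prop where
  transpose_mul_self : Oᵀ * O = d • (1 : Matrix n n ℂ)
  mul_transpose_self : O * Oᵀ = d • (1 : Matrix n n ℂ)

namespace IsScaledOrthogonal

variable {d : ℂ} {O : Matrix n n ℂ}

protected theorem transpose (hO : IsScaledOrthogonal d O) : IsScaledOrthogonal d Oᵀ :=
  ⟨hO.mul_transpose_self, hO.transpose_mul_self⟩

theorem row_dotProduct_row (hO : IsScaledOrthogonal d O) (i j : n) :
    O i ⬝ᵥ O j = if i = j then d else 0 :=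
  calc O i ⬝ᵥ O j = (O * Oᵀ) i j := rfl
    _ = if i = j then d else 0 := by simp [hO.mul_transpose_self, one_apply]

theorem norm_le_sum_modSq_row (hO : IsScaledOrthogonal d O) (i : n) :
    ‖d‖ ≤ ∑ j, modSq O i j :=
  calc ‖d‖ = ‖O i ⬝ᵥ O i‖ := by rw [hO.row_dotProduct_row, if_pos rfl]
    _ ≤ ∑ j, modSq O i j := norm_sum_mul_self_le Finset.univ (O i)

theorem excess_modSq_row_le (hO : IsScaledOrthogonal d O) (i j : n) :
    excess j (modSq O i) ≤ ‖d‖ :=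
  calc excess j (modSq O i) ≤ ‖O i ⬝ᵥ O i‖ := excess_norm_sq_le (O i) j
    _ = ‖d‖ := by rw [hO.row_dotProduct_row, if_pos rfl]

theorem excess_modSq_row_add_le_zero (hO : IsScaledOrthogonal d O) {i i' : n} (hne : i ≠ i')
    (j : n) : excess j (modSq O i) + excess j (modSq O i') ≤ 0 :=
  excess_norm_sq_add_le_zero (by simp [hO.row_dotProduct_row])
    (by simp [hO.row_dotProduct_row, hne]) j

theorem excess_modSq_mulVec_le (hO : IsScaledOrthogonal d O) {l : n → ℝ} (hl : ∀ i, 0 ≤ l i)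
    {i : n} (hi : 0 ≤ excess i l) (j : n) : excess j (modSq O *ᵥ l) ≤ ‖d‖ * excess i l := by
  set g : n → ℝ := fun k => excess j (modSq Oᵀ k)
  have g_le : g i ≤ ‖d‖ := hO.transpose.excess_modSq_row_le i j
  have pair_nonpos : ∀ k ∈ Finset.univ.erase i, l k * (g k + g i) ≤ 0 := fun k hk =>
    mul_nonpos_of_nonneg_of_nonpos (hl k)
      (hO.transpose.excess_modSq_row_add_le_zero (Finset.ne_of_mem_erase hk) j)
  calc excess j (modSq O *ᵥ l)
      = ∑ k, l k * g k := excess_mulVec (modSq O) j l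
    _ = ∑ k, l k * (g k + g i) - (∑ k, l k) * g i := by
        simp only [mul_add, Finset.sum_add_distrib, Finset.sum_mul, add_sub_cancel_right]
    _ = excess i l * g i + ∑ k ∈ Finset.univ.erase i, l k * (g k + g i) := by
        rw [← Finset.add_sum_erase _ _ (Finset.mem_univ i), excess]
        ring
    _ ≤ excess i l * g i := add_le_of_nonpos_right (Finset.sum_nonpos pair_nonpos)
    _ ≤ ‖d‖ * excess i l := by
        rw [mul_comm]
        gcongr

theorem norm_mul_sum_le_sum_modSq_mulVec (hO : IsScaledOrthogonal d O) {l : n → ℝ}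
    (hl : ∀ i, 0 ≤ l i) : ‖d‖ * ∑ i, l i ≤ ∑ j, (modSq O *ᵥ l) j :=
  calc ‖d‖ * ∑ i, l i
      = ∑ i, ‖d‖ * l i := Finset.mul_sum ..
    _ ≤ ∑ i, (∑ j, modSq Oᵀ i j) * l i := by
        gcongr with i
        · exact hl i
        · exact hO.transpose.norm_le_sum_modSq_row i
    _ = ∑ j, (modSq O *ᵥ l) j := by
        simp only [Finset.sum_mul]
        exact Finset.sum_comm

theorem norm_mul_le_modSq_mulVec (hO : IsScaledOrthogonal d O) {l : n → ℝ} {a : ℝ} (ha : 0 ≤ a)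
    (hal : ∀ i, a ≤ l i) (j : n) : ‖d‖ * a ≤ (modSq O *ᵥ l) j :=
  calc ‖d‖ * a
      ≤ (∑ i, modSq O j i) * a := by
        gcongr
        exact hO.norm_le_sum_modSq_row j
    _ = ∑ i, modSq O j i * a := Finset.sum_mul ..
    _ ≤ (modSq O *ᵥ l) j :=
        Finset.sum_le_sum fun i _ => mul_le_mul_of_nonneg_left (hal i) (modSq_nonneg O j i)

theorem norm_le_sum_erase_modSq_row_add (hO : IsScaledOrthogonal d O) {j j' : n} (hne : j ≠ j')
    (p : n) : ‖d‖ ≤ ∑ i ∈ Finset.univ.erase p, (modSq O j i + modSq O j' i) := by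
  have excess_nonpos := hO.excess_modSq_row_add_le_zero hne p
  have row_ge := hO.norm_le_sum_modSq_row j
  have row_ge' := hO.norm_le_sum_modSq_row j'
  rw [Finset.sum_erase_eq_sub (Finset.mem_univ p), Finset.sum_add_distrib]
  unfold excess at excess_nonpos
  linarith

theorem norm_mul_add_le_modSq_mulVec_add (hO : IsScaledOrthogonal d O) {l : n → ℝ} {a : ℝ} {p : n}
    (hp : 0 ≤ l p) (hpa : l p ≤ a) (hal : ∀ i ≠ p, a ≤ l i) {j j' : n} (hne : j ≠ j') :
    ‖d‖ * (a + l p) ≤ (modSq O *ᵥ l) j + (modSq O *ᵥ l) j' := by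
  set r : n → ℝ := fun i => modSq O j i + modSq O j' i
  have r_nonneg : ∀ i, 0 ≤ r i := fun i => add_nonneg (modSq_nonneg O j i) (modSq_nonneg O j' i)
  have two_norm_le : 2 * ‖d‖ ≤ ∑ i, r i := by
    rw [Finset.sum_add_distrib, two_mul]
    exact add_le_add (hO.norm_le_sum_modSq_row j) (hO.norm_le_sum_modSq_row j')
  have norm_le_erase : ‖d‖ ≤ ∑ i ∈ Finset.univ.erase p, r i :=
    hO.norm_le_sum_erase_modSq_row_add hne p
  calc ‖d‖ * (a + l p)
      = 2 * ‖d‖ * l p + ‖d‖ * (a - l p) := by ring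
    _ ≤ (∑ i, r i) * l p + (∑ i ∈ Finset.univ.erase p, r i) * (a - l p) := by
        gcongr
    _ = r p * l p + ∑ i ∈ Finset.univ.erase p, r i * a := by
        rw [← Finset.add_sum_erase _ r (Finset.mem_univ p), ← Finset.sum_mul]
        ring
    _ ≤ r p * l p + ∑ i ∈ Finset.univ.erase p, r i * l i := by
        gcongr with i hi
        · exact r_nonneg i
        · exact hal i (Finset.ne_of_mem_erase hi)
    _ = ∑ i, r i * l i := Finset.add_sum_erase _ (fun i => r i * l i) (Finset.mem_univ p)
    _ = (modSq O *ᵥ l) j + (modSq O *ᵥ l) j' := by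
        simp only [r, add_mul, Finset.sum_add_distrib, mulVec, dotProduct]

end IsScaledOrthogonal

end ScaledOrthogonal

section Magic

theorem invSqrt2_mul_self : invSqrt2 * invSqrt2 = 1 / 2 := by
  rw [invSqrt2, ← ofReal_mul, ← mul_inv, Real.mul_self_sqrt zero_le_two]
  norm_num

theorem conj_invSqrt2 : (starRingEnd ℂ) invSqrt2 = invSqrt2 := conj_ofReal _

/-- The phases that turn the Bell basis into the magic basis. -/
def magicPhase : Fin 4 → ℂ := ![1, I, I, 1]

/-- The matrix whose columns are the vectors of the magic basis, that is, the Bell states with the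
phases for which `σ_y ⊗ σ_y` composed with complex conjugation fixes each vector up to a common
sign. -/
def magic : Matrix Q2 (Fin 4) ℂ := of fun p i => magicPhase i * bell i p

/-- The matrix of the local operator `A ⊗ B` in the magic basis. -/
def magicRep (A B : Matrix (Fin 2) (Fin 2) ℂ) : Matrix (Fin 4) (Fin 4) ℂ :=
  magicᴴ * (A ⊗ₖ B) * magic

/-- The symplectic form on `ℂ²`, equal to `i σ_y`. -/
def symplectic : Matrix (Fin 2) (Fin 2) ℂ := !![0, 1; -1, 0]

theorem magicPhase_mul_conj (i : Fin 4) : magicPhase i * star (magicPhase i) = 1 := by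
  fin_cases i <;> simp [magicPhase]

theorem conjTranspose_magic_mul_magic : magicᴴ * magic = 1 := by
  ext i j
  fin_cases i <;> fin_cases j <;>
    simp [mul_apply, Fintype.sum_prod_type, magic, magicPhase, bell, conj_invSqrt2] <;>
    grind [I_sq, invSqrt2_mul_self]

theorem magic_mul_conjTranspose_magic : magic * magicᴴ = 1 :=
  (mul_eq_one_comm_of_card_eq _ _ _ (by simp)).1 conjTranspose_magic_mul_magic

theorem symplectic_kronecker_mul_magic : (symplectic ⊗ₖ symplectic) * magic = magicᴴᵀ := by
  ext ⟨a, b⟩ i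
  fin_cases a <;> fin_cases b <;> fin_cases i <;>
    simp [mul_apply, Fintype.sum_prod_type, magic, magicPhase, bell, symplectic, conj_invSqrt2]

theorem transpose_magic_mul_symplectic_kronecker :
    magicᵀ * (symplectic ⊗ₖ symplectic) = magicᴴ := by
  have transpose_symplectic : symplecticᵀ = -symplectic := by
    simp [symplectic, ← ext_iff, Fin.forall_fin_two]
  have transpose_kronecker : (symplectic ⊗ₖ symplectic)ᵀ = symplectic ⊗ₖ symplectic := by
    rw [← kroneckerMap_transpose, transpose_symplectic]
    ext
    simp
  rw [← transpose_transpose magicᴴ, ← symplectic_kronecker_mul_magic, transpose_mul,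
    transpose_kronecker]

theorem transpose_mul_symplectic (A : Matrix (Fin 2) (Fin 2) ℂ) :
    Aᵀ * symplectic = symplectic * A.adjugate := by
  ext a b
  fin_cases a <;> fin_cases b <;> simp [symplectic, mul_apply, adjugate_fin_two]

theorem magicRep_one : magicRep 1 1 = 1 := by
  rw [magicRep, one_kronecker_one, Matrix.mul_one, conjTranspose_magic_mul_magic]

theorem magicRep_smul_smul (a b : ℂ) (A B : Matrix (Fin 2) (Fin 2) ℂ) :
    magicRep (a • A) (b • B) = (a * b) • magicRep A B := by
  simp only [magicRep, smul_kronecker, kronecker_smul, smul_smul, Matrix.mul_smul, Matrix.smul_mul,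
    mul_comm b a]

theorem magicRep_mul_magicRep (A B A' B' : Matrix (Fin 2) (Fin 2) ℂ) :
    magicRep A B * magicRep A' B' = magicRep (A * A') (B * B') :=
  calc magicRep A B * magicRep A' B'
      = magicᴴ * (A ⊗ₖ B) * (magic * magicᴴ) * (A' ⊗ₖ B') * magic := by
        simp only [magicRep, Matrix.mul_assoc]
    _ = magicRep (A * A') (B * B') := by
        rw [magic_mul_conjTranspose_magic, Matrix.mul_one, Matrix.mul_assoc magicᴴ,
          ← mul_kronecker_mul, magicRep]

theorem transpose_magicRep (A B : Matrix (Fin 2) (Fin 2) ℂ) :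
    (magicRep A B)ᵀ = magicRep A.adjugate B.adjugate :=
  calc (magicRep A B)ᵀ
      = magicᵀ * ((Aᵀ ⊗ₖ Bᵀ) * (symplectic ⊗ₖ symplectic)) * magic := by
        rw [magicRep, transpose_mul, transpose_mul, ← symplectic_kronecker_mul_magic,
          ← kroneckerMap_transpose]
        simp only [Matrix.mul_assoc]
    _ = magicᵀ * (symplectic ⊗ₖ symplectic) * (A.adjugate ⊗ₖ B.adjugate) * magic := by
        rw [← mul_kronecker_mul, transpose_mul_symplectic, transpose_mul_symplectic,
          mul_kronecker_mul, ← Matrix.mul_assoc magicᵀ]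
    _ = magicRep A.adjugate B.adjugate := by
        rw [transpose_magic_mul_symplectic_kronecker, magicRep]

theorem isScaledOrthogonal_magicRep (A B : Matrix (Fin 2) (Fin 2) ℂ) :
    IsScaledOrthogonal (A.det * B.det) (magicRep A B) where
  transpose_mul_self := by
    rw [transpose_magicRep, magicRep_mul_magicRep, adjugate_mul, adjugate_mul, magicRep_smul_smul,
      magicRep_one]
  mul_transpose_self := by
    rw [transpose_magicRep, magicRep_mul_magicRep, mul_adjugate, mul_adjugate, magicRep_smul_smul,
      magicRep_one]

theorem rhoBD_eq_magic_mul_diagonal_mul (l : Fin 4 → ℝ) :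
    rhoBD l = magic * diagonal (fun i => (l i : ℂ)) * magicᴴ := by
  ext p q
  rw [mul_apply]
  simp only [rhoBD, BellProj, Matrix.sum_apply, Matrix.smul_apply, vecMulVec_apply,
    Pi.star_apply, smul_eq_mul, mul_diagonal, conjTranspose_apply, magic, of_apply, star_mul]
  refine Finset.sum_congr rfl fun i _ => ?_
  linear_combination -(l i * (bell i p * star (bell i q))) * magicPhase_mul_conj i

theorem magic_conj_rhoBD (l : Fin 4 → ℝ) :
    magicᴴ * rhoBD l * magic = diagonal fun i => (l i : ℂ) :=
  calc magicᴴ * rhoBD l * magic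
      = magicᴴ * magic * diagonal (fun i => (l i : ℂ)) * (magicᴴ * magic) := by
        simp only [rhoBD_eq_magic_mul_diagonal_mul, Matrix.mul_assoc]
    _ = diagonal fun i => (l i : ℂ) := by
        rw [conjTranspose_magic_mul_magic, Matrix.one_mul, Matrix.mul_one]

theorem magic_conj_kraus_rhoBD (A B : Matrix (Fin 2) (Fin 2) ℂ) (l : Fin 4 → ℝ) :
    magicᴴ * ((A ⊗ₖ B) * rhoBD l * (A ⊗ₖ B)ᴴ) * magic =
      magicRep A B * diagonal (fun i => (l i : ℂ)) * (magicRep A B)ᴴ := by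
  simp only [rhoBD_eq_magic_mul_diagonal_mul, magicRep, conjTranspose_mul,
    conjTranspose_conjTranspose, Matrix.mul_assoc]

theorem weights_eq_of_rhoBD_eq {ι : Type*} [Fintype ι] {l l' : Fin 4 → ℝ}
    {A B : ι → Matrix (Fin 2) (Fin 2) ℂ} {c : ℝ}
    (h : rhoBD l' = (c : ℂ) • ∑ k, (A k ⊗ₖ B k) * rhoBD l * (A k ⊗ₖ B k)ᴴ) :
    l' = c • ∑ k, modSq (magicRep (A k) (B k)) *ᵥ l := by
  have diagonal_eq : diagonal (fun i => (l' i : ℂ)) = (c : ℂ) • ∑ k,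
      magicRep (A k) (B k) * diagonal (fun i => (l i : ℂ)) * (magicRep (A k) (B k))ᴴ := by
    simp only [← magic_conj_rhoBD l', h, Matrix.mul_smul, Matrix.smul_mul, Matrix.mul_sum,
      Matrix.sum_mul, magic_conj_kraus_rhoBD]
  funext j
  have entry_eq := congrFun (congrFun diagonal_eq j) j
  simp only [diagonal_apply_eq, Matrix.smul_apply, Matrix.sum_apply, smul_eq_mul,
    mul_diagonal_mul_conjTranspose_apply_self] at entry_eq
  simp only [Pi.smul_apply, Finset.sum_apply, smul_eq_mul]
  exact_mod_cast entry_eq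

end Magic

section Scaling

/-- The weights `m` arise from `l` with scale factor `δ`: the excess of the first weight grows at
most by the factor `δ`, while the total weight and the sums of the last two and of the last one
weight grow at least by that factor. -/
structure ScalesBy (δ : ℝ) (l m : Fin 4 → ℝ) : Prop where
  excess_le : excess 0 m ≤ δ * excess 0 l
  mul_sum_le : δ * ∑ i, l i ≤ ∑ i, m i
  mul_last_two_le : δ * (l 2 + l 3) ≤ m 2 + m 3
  mul_last_le : δ * l 3 ≤ m 3

namespace ScalesBy

variable {l : Fin 4 → ℝ}

protected theorem sum {ι : Type*} (s : Finset ι) {δ : ι → ℝ} {m : ι → Fin 4 → ℝ}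
    (h : ∀ k ∈ s, ScalesBy (δ k) l (m k)) : ScalesBy (∑ k ∈ s, δ k) l (∑ k ∈ s, m k) where
  excess_le := by
    rw [excess_sum, Finset.sum_mul]
    exact Finset.sum_le_sum fun k hk => (h k hk).excess_le
  mul_sum_le := by
    simp only [Finset.sum_apply]
    rw [Finset.sum_mul, Finset.sum_comm]
    exact Finset.sum_le_sum fun k hk => (h k hk).mul_sum_le
  mul_last_two_le := by
    rw [Finset.sum_mul, Finset.sum_apply, Finset.sum_apply, ← Finset.sum_add_distrib]
    exact Finset.sum_le_sum fun k hk => (h k hk).mul_last_two_le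
  mul_last_le := by
    rw [Finset.sum_mul, Finset.sum_apply]
    exact Finset.sum_le_sum fun k hk => (h k hk).mul_last_le

protected theorem smul {δ c : ℝ} {m : Fin 4 → ℝ} (hc : 0 ≤ c) (h : ScalesBy δ l m) :
    ScalesBy (c * δ) l (c • m) where
  excess_le := by
    rw [excess_smul, mul_assoc]
    exact mul_le_mul_of_nonneg_left h.excess_le hc
  mul_sum_le := by
    simp only [Pi.smul_apply, smul_eq_mul, ← Finset.mul_sum, mul_assoc]
    exact mul_le_mul_of_nonneg_left h.mul_sum_le hc
  mul_last_two_le := by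
    simp only [Pi.smul_apply, smul_eq_mul, ← mul_add, mul_assoc]
    exact mul_le_mul_of_nonneg_left h.mul_last_two_le hc
  mul_last_le := by
    simp only [Pi.smul_apply, smul_eq_mul, mul_assoc]
    exact mul_le_mul_of_nonneg_left h.mul_last_le hc

end ScalesBy

theorem IsScaledOrthogonal.scalesBy {d : ℂ} {O : Matrix (Fin 4) (Fin 4) ℂ}
    (hO : IsScaledOrthogonal d O) {l : Fin 4 → ℝ} (hl : ∀ i, 0 ≤ l i) (ho : IsOrdered l)
    (he : 0 ≤ excess 0 l) : ScalesBy ‖d‖ l (modSq O *ᵥ l) := by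
  obtain ⟨h10, h21, h32⟩ := ho
  have last_le : ∀ i, l 3 ≤ l i := by
    intro i
    fin_cases i <;> grind
  have third_le : ∀ i ≠ 3, l 2 ≤ l i := by
    intro i hi
    fin_cases i <;> grind
  exact {
    excess_le := hO.excess_modSq_mulVec_le hl he 0
    mul_sum_le := hO.norm_mul_sum_le_sum_modSq_mulVec hl
    mul_last_two_le := hO.norm_mul_add_le_modSq_mulVec_add (hl 3) h32 third_le (by decide)
    mul_last_le := hO.norm_mul_le_modSq_mulVec (hl 3) last_le 3 }

theorem SLOCCto.exists_scalesBy {l l' : Fin 4 → ℝ} (hS : SLOCCto (rhoBD l) (rhoBD l'))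
    (hl : ∀ i, 0 ≤ l i) (ho : IsOrdered l) (he : 0 ≤ excess 0 l) : ∃ δ, ScalesBy δ l l' := by
  obtain ⟨N, A, B, c, hc, h⟩ := hS
  rw [weights_eq_of_rhoBD_eq h]
  exact ⟨_, ScalesBy.smul hc.le <| ScalesBy.sum _ fun k _ =>
    (isScaledOrthogonal_magicRep (A k) (B k)).scalesBy hl ho he⟩

theorem mul_le_mul_of_scaling {R : Type*} [CommSemiring R] [PartialOrder R] [IsOrderedRing R]
    {δ e e' t t' : R} (he : 0 ≤ e) (ht : 0 ≤ t) (hee' : e' ≤ δ * e) (htt' : δ * t ≤ t') :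
    e' * t ≤ e * t' :=
  calc e' * t ≤ δ * e * t := mul_le_mul_of_nonneg_right hee' ht
    _ = e * (δ * t) := by ring
    _ ≤ e * t' := mul_le_mul_of_nonneg_left htt' he

end Scaling

theorem excess_zero_of_sum_eq_one {l : Fin 4 → ℝ} (hl : ∑ i, l i = 1) :
    excess 0 l = 1 - 2 * (l 1 + l 2 + l 3) := by
  rw [excess, hl]
  rw [Fin.sum_univ_four] at hl
  linarith

theorem stmt13_general (l l' : Fin 4 → ℝ) (hw : IsWeight l) (hsum' : ∑ i, l' i = 1)
    (ho : IsOrdered l) (h1 : 1 / 2 ≤ l 0) (hS : SLOCCto (rhoBD l) (rhoBD l')) :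
    l' 0 ≤ l 0 ∧
    (1 - 2 * l' 1) * (l 2 + l 3) ≤ (1 - 2 * l 1) * (l' 2 + l' 3) ∧
    (1 - 2 * l' 1 - 2 * l' 2) * l 3 ≤ (1 - 2 * l 1 - 2 * l 2) * l' 3 := by
  obtain ⟨hl, hsum⟩ := hw
  have he : 0 ≤ excess 0 l := by
    rw [excess, hsum]
    linarith
  obtain ⟨δ, hδ⟩ := hS.exists_scalesBy hl ho he
  have bound {t t' : ℝ} (ht : 0 ≤ t) (htt' : δ * t ≤ t') :
      (1 - 2 * (l' 1 + l' 2 + l' 3)) * t ≤ (1 - 2 * (l 1 + l 2 + l 3)) * t' := by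
    rw [← excess_zero_of_sum_eq_one hsum, ← excess_zero_of_sum_eq_one hsum']
    exact mul_le_mul_of_scaling he ht hδ.excess_le htt'
  have bound_total := bound (by rw [hsum]; exact zero_le_one) hδ.mul_sum_le
  have bound_last_two := bound (add_nonneg (hl 2) (hl 3)) hδ.mul_last_two_le
  have bound_last := bound (hl 3) hδ.mul_last_le
  rw [hsum, hsum'] at bound_total
  rw [Fin.sum_univ_four] at hsum hsum'
  refine ⟨?_, ?_, ?_⟩ <;> linarith

/-- if two entangled ordered Bell-diagonal states satisfy
`ρ_BD(λ) → ρ_BD(λ')` under SLOCC, then the three monotone inequalities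
`E_i(λ) ≥ E_i(λ')` hold (in cross-multiplied form). -/
theorem stmt13 (l l' : Fin 4 → ℝ) (hw : IsWeight l) (hw' : IsWeight l')
    (ho : IsOrdered l) (ho' : IsOrdered l')
    (h1 : 1 / 2 < l 0) (h1' : 1 / 2 < l' 0)
    (hS : SLOCCto (rhoBD l) (rhoBD l')) :
    l' 0 ≤ l 0 ∧
    (1 - 2 * l' 1) * (l 2 + l 3) ≤ (1 - 2 * l 1) * (l' 2 + l' 3) ∧
    (1 - 2 * l' 1 - 2 * l' 2) * l 3 ≤ (1 - 2 * l 1 - 2 * l 2) * l' 3 :=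
  stmt13_general l l' hw hw'.2 ho h1.le hS

end Paper
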